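/- Let p > 0, 0 < δ < p, λ > 0, μ > 0, q > 0, and let W^{(q)}, 𝕎^{(q)} be the explicit q-scale functions of the Cramér–Lundberg model. Then for all x ≥ 0 and z > 0: W^{(q)}(x+z) + δ∫₀ˣ 𝕎^{(q)}(x−y) W^{(q)′}(y+z) dy = (p−δ) 𝕎^{(q)}(x) W^{(q)}(z) − (1/(μλ)) [ (q+λ)W^{(q)}(z) − p W^{(q)′}(z) ] · [ (q+λ)𝕎^{(q)}(x) − (p−δ)𝕎^{(q)′}(x) ]. -/

import Mathlib

open MeasureTheory

/- Cramér–Lundberg model with explicit q-scale functions W^{(q)} (for X) and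
   𝕎^{(q)} (for Y = X − δ·).  The left-hand side below is the refracted
   scale function w^{(q)}(x;−z). -/

noncomputable def qp (p lam μ q : ℝ) : ℝ :=
  (q + lam - μ * p + Real.sqrt ((q + lam - μ * p) ^ 2 + 4 * p * q * μ)) / (2 * p)

noncomputable def qm (p lam μ q : ℝ) : ℝ :=
  (q + lam - μ * p - Real.sqrt ((q + lam - μ * p) ^ 2 + 4 * p * q * μ)) / (2 * p)

noncomputable def Ap (p lam μ q : ℝ) : ℝ := (μ + qp p lam μ q) / (qp p lam μ q - qm p lam μ q)

noncomputable def Am (p lam μ q : ℝ) : ℝ := (μ + qm p lam μ q) / (qp p lam μ q - qm p lam μ q)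

/-- The q-scale function W^{(q)} of X (its formula on [0,∞)). -/
noncomputable def Wq (p lam μ q x : ℝ) : ℝ :=
  1 / p * (Ap p lam μ q * Real.exp (qp p lam μ q * x) -
    Am p lam μ q * Real.exp (qm p lam μ q * x))

/-- The q-scale function 𝕎^{(q)} of Y (its formula on [0,∞)). -/
noncomputable def WWq (p δ lam μ q x : ℝ) : ℝ := Wq (p - δ) lam μ q x

section ScaleFunction

variable {p lam μ q : ℝ}

lemma discrim_pos (hp : 0 < p) (hμ : 0 < μ) (hq : 0 < q) :
    0 < (q + lam - μ * p) ^ 2 + 4 * p * q * μ := by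
  positivity

lemma qp_isRoot (hp : 0 < p) (hμ : 0 < μ) (hq : 0 < q) :
    p * qp p lam μ q ^ 2 = (q + lam - μ * p) * qp p lam μ q + q * μ := by
  have hs := Real.sq_sqrt (discrim_pos (lam := lam) hp hμ hq).le
  unfold qp
  generalize Real.sqrt ((q + lam - μ * p) ^ 2 + 4 * p * q * μ) = s at hs ⊢
  field_simp
  linear_combination hs

lemma qm_isRoot (hp : 0 < p) (hμ : 0 < μ) (hq : 0 < q) :
    p * qm p lam μ q ^ 2 = (q + lam - μ * p) * qm p lam μ q + q * μ := by
  have hs := Real.sq_sqrt (discrim_pos (lam := lam) hp hμ hq).le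
  unfold qm
  generalize Real.sqrt ((q + lam - μ * p) ^ 2 + 4 * p * q * μ) = s at hs ⊢
  field_simp
  linear_combination hs

lemma mul_qp_add_qm (hp : 0 < p) :
    p * (qp p lam μ q + qm p lam μ q) = q + lam - μ * p := by
  unfold qp qm
  field_simp
  ring

lemma qp_sub_qm_pos (hp : 0 < p) (hμ : 0 < μ) (hq : 0 < q) :
    0 < qp p lam μ q - qm p lam μ q := by
  have hs := Real.sqrt_pos.2 (discrim_pos (lam := lam) hp hμ hq)
  unfold qp qm
  rw [← sub_div]
  exact div_pos (by linarith) (by linarith)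

lemma hasDerivAt_const_mul_exp (a r x : ℝ) :
    HasDerivAt (fun y => a * Real.exp (r * y)) (a * r * Real.exp (r * x)) x := by
  have h := (((hasDerivAt_id x).const_mul r).exp).const_mul a
  simp only [id_eq, mul_one] at h
  exact h.congr_deriv (by ring)

lemma hasDerivAt_Wq (x : ℝ) :
    HasDerivAt (Wq p lam μ q)
      (1 / p * (Ap p lam μ q * qp p lam μ q * Real.exp (qp p lam μ q * x) -
        Am p lam μ q * qm p lam μ q * Real.exp (qm p lam μ q * x))) x :=
  ((hasDerivAt_const_mul_exp _ _ x).sub (hasDerivAt_const_mul_exp _ _ x)).const_mul (1 / p)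

lemma deriv_Wq :
    deriv (Wq p lam μ q) = fun x =>
      1 / p * (Ap p lam μ q * qp p lam μ q * Real.exp (qp p lam μ q * x) -
        Am p lam μ q * qm p lam μ q * Real.exp (qm p lam μ q * x)) :=
  funext fun x => (hasDerivAt_Wq x).deriv

/-- The scale function solves `p W'' = (q + λ - μ p) W' + q μ W`. -/
lemma hasDerivAt_deriv_Wq (hp : 0 < p) (hμ : 0 < μ) (hq : 0 < q) (x : ℝ) :
    HasDerivAt (deriv (Wq p lam μ q))
      (((q + lam - μ * p) * deriv (Wq p lam μ q) x + q * μ * Wq p lam μ q x) / p) x := by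
  have h := ((hasDerivAt_const_mul_exp (Ap p lam μ q * qp p lam μ q) (qp p lam μ q) x).sub
    (hasDerivAt_const_mul_exp (Am p lam μ q * qm p lam μ q) (qm p lam μ q) x)).const_mul (1 / p)
  rw [deriv_Wq]
  refine h.congr_deriv ?_
  have h₁ := qp_isRoot (lam := lam) hp hμ hq
  have h₂ := qm_isRoot (lam := lam) hp hμ hq
  unfold Wq
  beta_reduce
  generalize Real.exp (qp p lam μ q * x) = e₁, Real.exp (qm p lam μ q * x) = e₂
  field_simp
  linear_combination Ap p lam μ q * e₁ * h₁ - Am p lam μ q * e₂ * h₂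

lemma continuous_Wq : Continuous (Wq p lam μ q) :=
  continuous_iff_continuousAt.2 fun x => (hasDerivAt_Wq x).continuousAt

lemma continuous_deriv_Wq : Continuous (deriv (Wq p lam μ q)) := by
  rw [deriv_Wq]
  fun_prop

lemma Wq_zero (hp : 0 < p) (hμ : 0 < μ) (hq : 0 < q) : Wq p lam μ q 0 = 1 / p := by
  have hd := (qp_sub_qm_pos (lam := lam) hp hμ hq).ne'
  simp only [Wq, Ap, Am, mul_zero, Real.exp_zero, mul_one]
  field_simp
  ring

lemma deriv_Wq_zero (hp : 0 < p) (hμ : 0 < μ) (hq : 0 < q) :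
    p * deriv (Wq p lam μ q) 0 = (q + lam) / p := by
  have hd := (qp_sub_qm_pos (lam := lam) hp hμ hq).ne'
  have hs := mul_qp_add_qm (lam := lam) (μ := μ) (q := q) hp
  simp only [deriv_Wq, Ap, Am, mul_zero, Real.exp_zero, mul_one]
  field_simp
  linear_combination (qp p lam μ q - qm p lam μ q) * hs

/-- The function `B = (q + λ) W - p W'` satisfies `B' = μ (λ W - B)`. -/
lemma hasDerivAt_mul_Wq_sub_mul_deriv (hp : 0 < p) (hμ : 0 < μ) (hq : 0 < q) (x : ℝ) :
    HasDerivAt (fun y => (q + lam) * Wq p lam μ q y - p * deriv (Wq p lam μ q) y)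
      (μ * (lam * Wq p lam μ q x -
        ((q + lam) * Wq p lam μ q x - p * deriv (Wq p lam μ q) x))) x := by
  have hW := (hasDerivAt_Wq (p := p) (lam := lam) (μ := μ) (q := q) x).differentiableAt.hasDerivAt
  have h := (hW.const_mul (q + lam)).sub
    ((hasDerivAt_deriv_Wq (lam := lam) hp hμ hq x).const_mul p)
  refine h.congr_deriv ?_
  field_simp
  ring

end ScaleFunction

theorem refracted_scale_function_CL (p δ lam μ q : ℝ)
    (hp : 0 < p) (hδ : 0 < δ) (hδp : δ < p) (hlam : 0 < lam) (hμ : 0 < μ) (hq : 0 < q)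
    (x z : ℝ) (hx : 0 ≤ x) (hz : 0 < z) :
    Wq p lam μ q (x + z) +
        δ * ∫ y in (0 : ℝ)..x, WWq p δ lam μ q (x - y) * deriv (Wq p lam μ q) (y + z)
      = (p - δ) * WWq p δ lam μ q x * Wq p lam μ q z -
        1 / (μ * lam) *
          ((q + lam) * Wq p lam μ q z - p * deriv (Wq p lam μ q) z) *
          ((q + lam) * WWq p δ lam μ q x - (p - δ) * deriv (WWq p δ lam μ q) x) := by
  have hr : 0 < p - δ := sub_pos.2 hδp
  have hWW : WWq p δ lam μ q = Wq (p - δ) lam μ q := rfl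
  rw [hWW]
  set W := Wq p lam μ q with hW
  set V := Wq (p - δ) lam μ q with hV
  set B : ℝ → ℝ := fun t => (q + lam) * W t - p * deriv W t with hB
  set C : ℝ → ℝ := fun t => (q + lam) * V t - (p - δ) * deriv V t with hC
  have hderiv : ∀ y ∈ Set.uIcc 0 x, HasDerivAt
      (fun y => -((p - δ) * V (x - y) * W (y + z) - 1 / (μ * lam) * B (y + z) * C (x - y)))
      (δ * (V (x - y) * deriv W (y + z))) y := by
    intro y _
    have hW' : HasDerivAt (fun y => W (y + z)) (deriv W (y + z)) y :=
      (hasDerivAt_Wq (y + z)).differentiableAt.hasDerivAt.comp_add_const y z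
    have hV' : HasDerivAt (fun y => V (x - y)) (-deriv V (x - y)) y :=
      (hasDerivAt_Wq (x - y)).differentiableAt.hasDerivAt.comp_const_sub x y
    have hB' := (hasDerivAt_mul_Wq_sub_mul_deriv (lam := lam) hp hμ hq (y + z)).comp_add_const y z
    have hC' := (hasDerivAt_mul_Wq_sub_mul_deriv (lam := lam) hr hμ hq (x - y)).comp_const_sub x y
    refine (((hV'.const_mul (p - δ)).mul hW').sub
      ((hB'.const_mul (1 / (μ * lam))).mul hC')).neg.congr_deriv ?_
    simp only [← hW, ← hV]
    field_simp
    ring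
  have hint : IntervalIntegrable (fun y => δ * (V (x - y) * deriv W (y + z))) volume 0 x := by
    have hVc : Continuous V := continuous_Wq
    have hWc : Continuous (deriv W) := continuous_deriv_Wq
    exact Continuous.intervalIntegrable (by fun_prop) 0 x
  have hC0 : C 0 = 0 := by
    simp only [hC, hV, Wq_zero hr hμ hq, deriv_Wq_zero hr hμ hq]
    ring
  have hV0 : (p - δ) * V 0 = 1 := by
    rw [hV, Wq_zero hr hμ hq, mul_one_div_cancel hr.ne']
  rw [← intervalIntegral.integral_const_mul,
    intervalIntegral.integral_eq_sub_of_hasDerivAt hderiv hint]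
  simp only [sub_self, sub_zero, zero_add, hC0, hV0]
  ring
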